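/- For all n ≥ 3 and all natural numbers u, v, the number of π ∈ NC(n,3) with skip(π) = u and leap(π) = v equals the number of π ∈ NC(n,3) with skip(π) = v and leap(π) = u. (Combinatorial symmetry N_{n,3}(q,t) = N_{n,3}(t,q) of the q,t-Narayana polynomial interpreted via the pair (skip, leap).) -/

import Mathlib

namespace QtN

/-! ### Lattice paths and parallelogram polyominoes -/

/-- A step of a lattice path: east or north. -/
inductive Step : Type
  | E : Step
  | N : Step
  deriving DecidableEq, Repr

/-- Number of east steps of a path. -/
def countE (w : List Step) : ℕ := w.count Step.E

/-- Number of north steps of a path. -/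
def countN (w : List Step) : ℕ := w.count Step.N

/-- Endpoint of a path started at the origin. -/
def pathPos (w : List Step) : ℕ × ℕ := (countE w, countN w)

/-- The set of lattice points visited by a path started at the origin. -/
def pathPts (w : List Step) : Finset (ℕ × ℕ) :=
  ((List.range (w.length + 1)).map (fun i => pathPos (w.take i))).toFinset

/-- `colHeightsAux w h`: for each east step of `w` (in order), the number of north
steps preceding it, starting with `h` north steps already performed. -/
def colHeightsAux : List Step → ℕ → List ℕ
  | [], _ => []
  | Step.E :: r, h => h :: colHeightsAux r h
  | Step.N :: r, h => colHeightsAux r (h + 1)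

/-- Height at which the path `w` crosses the vertical strip `i ≤ x ≤ i + 1`. -/
def colHeight (w : List Step) (i : ℕ) : ℕ := (colHeightsAux w 0).getD i 0

/-- A parallelogram polyomino of size `m × n`: a pair of monotone lattice paths from
`(0,0)` to `(m,n)` (east/north steps), the upper path staying weakly above the lower
path, and the two paths meeting only at `(0,0)` and `(m,n)`. -/
structure Polyomino (m n : ℕ) : Type where
  lower : List Step
  upper : List Step
  lowerE : countE lower = m
  lowerN : countN lower = n
  upperE : countE upper = m
  upperN : countN upper = n
  above : ∀ i < m, colHeight lower i ≤ colHeight upper i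
  meet : pathPts upper ∩ pathPts lower = {(0, 0), (m, n)}

/-- The area statistic: number of unit squares between the two paths,
minus `(m + n - 1)`. -/
def area {m n : ℕ} (P : Polyomino m n) : ℕ :=
  (∑ i ∈ Finset.range m, (colHeight P.upper i - colHeight P.lower i)) - (m + n - 1)

/-- Where an eastward run at height `y`, starting at `x`, first hits the lower path. -/
def eastTarget (hL : ℕ → ℕ) (m x y : ℕ) : ℕ :=
  ((List.range m).filter (fun i => decide (x ≤ i ∧ y ≤ hL i))).headD m

/-- Total bounce contribution: from state `(x, y)` just after the `j`-th east-to-north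
turn (counting the turns made so far), alternately go north until hitting the upper
path and east until hitting the lower path, each step contributing the number of
east-to-north turns preceding it. -/
def bounceAux (hU hL : ℕ → ℕ) (m n : ℕ) : ℕ → ℕ → ℕ → ℕ → ℕ
  | 0, _, _, _ => 0
  | fuel + 1, x, y, j =>
    if x = m ∧ y = n then 0
    else
      let y' := hU (x - 1)
      let x' := if y' = n then m else eastTarget hL m x y'
      (j + 1) * ((y' - y) + (x' - x)) + bounceAux hU hL m n fuel x' y' (j + 1)

/-- The bounce statistic of a parallelogram polyomino: the bounce path starts with a
single east step (contributing `0`) and then alternates north runs (to the ceiling)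
and east runs (to the floor); each step contributes the number of east-to-north turns
preceding it; finally `(m + n - 1)` is subtracted. -/
def bounce {m n : ℕ} (P : Polyomino m n) : ℕ :=
  bounceAux (colHeight P.upper) (colHeight P.lower) m n (m + n + 2) 1 0 0 - (m + n - 1)

/-! ### Set partitions and noncrossing partitions -/

/-- Maximum of a finite set of naturals (`0` for the empty set). -/
def fmax (β : Finset ℕ) : ℕ := β.sup id

/-- Minimum of a finite set of naturals (`0` for the empty set). -/
def fmin (β : Finset ℕ) : ℕ := if h : β.Nonempty then β.min' h else 0

/-- A set partition of `{1, …, n}`, given by its finite set of blocks. -/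
structure SetPartition (n : ℕ) : Type where
  blocks : Finset (Finset ℕ)
  not_empty_mem : ∅ ∉ blocks
  cover : ∀ i : ℕ, i ∈ Finset.Icc 1 n ↔ ∃ β ∈ blocks, i ∈ β
  disjoint : ∀ β ∈ blocks, ∀ γ ∈ blocks, β ≠ γ → Disjoint β γ

/-- A family of blocks is noncrossing if there are no `a < b < c < d` with
`a, c` in one block and `b, d` in a different block. -/
def IsNoncrossing (bs : Finset (Finset ℕ)) : Prop :=
  ∀ a b c d : ℕ, a < b → b < c → c < d →
    ∀ β ∈ bs, ∀ γ ∈ bs, a ∈ β → c ∈ β → b ∈ γ → d ∈ γ → β = γ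

/-- `NC n k`: noncrossing partitions of `{1, …, n}` with exactly `n - k + 1` blocks. -/
abbrev NC (n k : ℕ) : Type :=
  {P : SetPartition n // IsNoncrossing P.blocks ∧ P.blocks.card = n - k + 1}

/-- The skip statistic: `∑_{β} (max β - min β - |β| + 1)`. -/
def skip (bs : Finset (Finset ℕ)) : ℕ :=
  ∑ β ∈ bs, ((fmax β + 1 - fmin β) - β.card)

/-- The non-singleton blocks of a partition. -/
def nsBlocks (bs : Finset (Finset ℕ)) : Finset (Finset ℕ) :=
  bs.filter (fun β => 2 ≤ β.card)

/-- The block of `bs` containing `x` (junk if there is not exactly one). -/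
def blockContaining (bs : Finset (Finset ℕ)) (x : ℕ) : Finset ℕ :=
  (bs.filter (fun β => x ∈ β)).sup id

/-- For a noncrossing partition in `NC n 3`, the quadruple `(a, b, c, d)` describing its
non-singleton blocks: for two pair blocks `{a,b}` and `{c,d}` (with `a` the global
minimum) this is `(a, b, c, d)`; for a single triple block `{a, b, c}` (`a < b < c`)
this is `(a, b, b, c)`. -/
def blockQuad (bs : Finset (Finset ℕ)) : ℕ × ℕ × ℕ × ℕ :=
  let A := blockContaining (nsBlocks bs) (fmin ((nsBlocks bs).sup id))
  if (nsBlocks bs).card = 1 then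
    let l := A.sort (· ≤ ·)
    (l.getD 0 0, l.getD 1 0, l.getD 1 0, l.getD 2 0)
  else
    let B := ((nsBlocks bs).erase A).sup id
    (fmin A, fmax A, fmin B, fmax B)

/-- The leap statistic on `NC n 3`: `leap(ab|cd) = c - 2 + max(0, c - b)`,
and `leap({a,b,c}) = b - 2` (the case `b = c`). -/
def leap (bs : Finset (Finset ℕ)) : ℕ :=
  let (_, b, c, _) := blockQuad bs
  (c - 2) + (c - b)

/-- The skew statistic on `NC n 3`: `skew(ab|cd) = c - 2 + a` if `b < c`, else `c - 2`;
`skew({a,b,c}) = b - 2` (the case `b = c`). -/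
def skew (bs : Finset (Finset ℕ)) : ℕ :=
  let (a, b, c, _) := blockQuad bs
  if b < c then c - 2 + a else c - 2

/-- The mag statistic on `NC n 3`: `mag(ab|cd) = a + max(b, c) - 2 - ⌈(b - a)/2⌉`,
and `mag({a,b,c}) = a + b - 2 - ⌈(b - a)/2⌉` (the case `b = c`). -/
def mag (bs : Finset (Finset ℕ)) : ℕ :=
  let (a, b, c, _) := blockQuad bs
  a + max b c - 2 - (b - a + 1) / 2

/-- The area statistic on noncrossing partitions:
`area(π) = ∑_{β, β' ∈ π} #{ i ∈ β' : i < max β < max β' }` (ordered pairs of blocks). -/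
def ncArea (bs : Finset (Finset ℕ)) : ℕ :=
  ∑ β ∈ bs, ∑ γ ∈ bs, (γ.filter (fun i => i < fmax β ∧ fmax β < fmax γ)).card

/-- The elements of the non-singleton blocks, listed in increasing order, with
the middle element of a size-3 block listed twice. -/
def nsList (bs : Finset (Finset ℕ)) : List ℕ :=
  let l := ((nsBlocks bs).sup id).sort (· ≤ ·)
  if l.length = 3 then [l.getD 0 0, l.getD 1 0, l.getD 1 0, l.getD 2 0] else l

/-- The multiset of block sizes of a partition. -/
def blockSizes (bs : Finset (Finset ℕ)) : Multiset ℕ := bs.val.map Finset.card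

/-- The image of a partition of `{1, …, n}` under the flip `i ↦ n + 1 - i`. -/
def flipBlocks (n : ℕ) (bs : Finset (Finset ℕ)) : Finset (Finset ℕ) :=
  bs.image (fun β => β.image (fun i => n + 1 - i))

/-! ### The mingarc statistic -/

/-- The gaps `ν_r = m_{r+1} - m_r - 1` between consecutive block minima
`m_1 < ⋯ < m_h` (with `m_{h+1} = n + 1`). -/
def nuList (n : ℕ) (bs : Finset (Finset ℕ)) : List ℕ :=
  let ms := ((bs.image fmin).sort (· ≤ ·)) ++ [n + 1]
  (List.range (bs.image fmin).card).map (fun r => ms.getD (r + 1) 0 - ms.getD r 0 - 1)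

/-- Concatenation of `replicate ν c` over a list of pairs `(c, ν)`. -/
def repeatEach : List (ℕ × ℕ) → List ℕ
  | [] => []
  | p :: r => List.replicate p.2 p.1 ++ repeatEach r

/-- The right endpoints `y_1 ≤ ⋯ ≤ y_{k-1}`: each block maximum `c_r` repeated
`ν_r` times, in increasing order. -/
def ysList (n : ℕ) (bs : Finset (Finset ℕ)) : List ℕ :=
  repeatEach (List.zip ((bs.image fmax).sort (· ≤ ·)) (nuList n bs))

/-- The left endpoints `x_1 < ⋯ < x_{k-1}`: the elements of `{1, …, n}` that are not
block maxima, in increasing order. -/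
def xsList (n : ℕ) (bs : Finset (Finset ℕ)) : List ℕ :=
  ((Finset.Icc 1 n).filter (fun i => i ∉ bs.image fmax)).sort (· ≤ ·)

/-- Greedy left-to-right selection of arcs: keep the first arc, and thereafter keep the
earliest arc whose left endpoint exceeds the right endpoint of the last kept arc. -/
def greedyArcs : List (ℕ × ℕ) → Option ℕ → List (ℕ × ℕ)
  | [], _ => []
  | a :: rest, none => a :: greedyArcs rest (some a.2)
  | a :: rest, some r =>
      if r < a.1 then a :: greedyArcs rest (some a.2) else greedyArcs rest (some r)

/-- The mingarc statistic: the sum of `n - y_i` over the greedily selected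
candidate arcs `[x_i, y_i]`. -/
def mingarc (n : ℕ) (bs : Finset (Finset ℕ)) : ℕ :=
  ((greedyArcs (List.zip (xsList n bs) (ysList n bs)) none).map (fun p => n - p.2)).sum

/-! ### The map η from polyominoes to noncrossing partitions -/

/-- Largest column index `i < m` with `colHeight lower i ≤ j`: the rightmost cell
adjacent to the floor in row `j`. -/
def eFloor {m k : ℕ} (P : Polyomino m k) (j : ℕ) : ℕ :=
  (((List.range m).filter (fun i => decide (colHeight P.lower i ≤ j))).getLastD 0)

/-- Smallest column index `i` with `colHeight upper i ≥ j + 1`: the leftmost cell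
adjacent to the ceiling in row `j` (with default `m - 1`). -/
def fCeil {m k : ℕ} (P : Polyomino m k) (j : ℕ) : ℕ :=
  (((List.range m).filter (fun i => decide (j + 1 ≤ colHeight P.upper i))).headD (m - 1))

/-- The number of cells adjacent to the ceiling in row `j`. -/
def rowCount {m k : ℕ} (P : Polyomino m k) (j : ℕ) : ℕ :=
  fCeil P (j + 1) - fCeil P j + 1

/-- Pick, `cnt` times, the largest label in `{1, …, L}` not used yet. -/
def pickRow : ℕ → ℕ → Finset ℕ → Finset ℕ
  | 0, _, _ => ∅
  | cnt + 1, L, used =>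
      let x := fmax ((Finset.Icc 1 L) \ used)
      insert x (pickRow cnt L (insert x used))

/-- The blocks of `η(P)`: label the cells adjacent to the floor `1, …, n` going bottom
to top, left to right (the label of the floor cell in column `i`, row `j` is
`i + j + 1`, and the labels present in rows `≤ j` are exactly `1, …, eFloor P j + j + 1`);
then going bottom to top, left to right over the cells adjacent to the ceiling, assign
to each the largest unused indexing label occurring in the same row or below; the
blocks are the label sets of the ceiling rows. -/
def etaBlocks {m k : ℕ} (P : Polyomino m k) : Finset (Finset ℕ) :=
  (((List.range k).foldl
      (fun st j =>
        let B := pickRow (rowCount P j) (eFloor P j + j + 1) st.1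
        (st.1 ∪ B, B :: st.2))
      ((∅ : Finset ℕ), ([] : List (Finset ℕ)))).2).toFinset


/-! ### Proof -/

theorem ns_sum {n : ℕ} (P : SetPartition n) :
    ∑ β ∈ nsBlocks P.blocks, (β.card - 1) + P.blocks.card = n := by
  have h1 : ∑ β ∈ P.blocks, β.card = n := by
    have h := Finset.card_biUnion (s := P.blocks) (t := fun β => β)
      (fun x hx y hy hxy => P.disjoint x hx y hy hxy)
    rw [← h]
    have : P.blocks.biUnion (fun β => β) = Finset.Icc 1 n := by
      ext i
      rw [P.cover i]; simp
    rw [this]; simp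
  have hpos : ∀ β ∈ P.blocks, 1 ≤ β.card := by
    intro β hβ
    rcases Finset.eq_empty_or_nonempty β with h | h
    · subst h; exact absurd hβ P.not_empty_mem
    · exact h.card_pos
  have h2 : ∑ β ∈ nsBlocks P.blocks, (β.card - 1) = ∑ β ∈ P.blocks, (β.card - 1) := by
    unfold nsBlocks
    apply Finset.sum_filter_of_ne
    intro x hx h
    omega
  rw [h2, Finset.card_eq_sum_ones, ← Finset.sum_add_distrib]
  refine Eq.trans ?_ h1
  apply Finset.sum_congr rfl
  intro β hβ
  have := hpos β hβ
  omega

theorem eq_of_mem_mem {n : ℕ} (P : SetPartition n) {β γ : Finset ℕ} (hβ : β ∈ P.blocks)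
    (hγ : γ ∈ P.blocks) {x : ℕ} (h1 : x ∈ β) (h2 : x ∈ γ) : β = γ := by
  by_contra h
  exact Finset.disjoint_left.1 (P.disjoint β hβ γ hγ h) h1 h2

theorem card_one_of {n : ℕ} (P : SetPartition n) {β : Finset ℕ} (hβ : β ∈ P.blocks)
    (h : ¬ 2 ≤ β.card) : ∃ x, β = {x} := by
  rw [← Finset.card_eq_one]
  have : β.card ≠ 0 := by
    intro h0
    rw [Finset.card_eq_zero] at h0
    subst h0; exact P.not_empty_mem hβ
  omega

theorem blocks_subset_of_ns {n : ℕ} (P Q : SetPartition n)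
    (h : nsBlocks P.blocks = nsBlocks Q.blocks) : P.blocks ⊆ Q.blocks := by
  intro β hβ
  by_cases hc : 2 ≤ β.card
  · have : β ∈ nsBlocks P.blocks := Finset.mem_filter.2 ⟨hβ, hc⟩
    rw [h] at this
    exact (Finset.mem_filter.1 this).1
  · obtain ⟨x, rfl⟩ := card_one_of P hβ hc
    obtain ⟨γ, hγ, hx⟩ := (Q.cover x).1 ((P.cover x).2 ⟨_, hβ, by simp⟩)
    by_cases hc' : 2 ≤ γ.card
    · have : γ ∈ nsBlocks Q.blocks := Finset.mem_filter.2 ⟨hγ, hc'⟩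
      rw [← h] at this
      have := eq_of_mem_mem P hβ (Finset.mem_filter.1 this).1 (by simp) hx
      rw [← this] at hc'; simp at hc'
    · obtain ⟨y, rfl⟩ := card_one_of Q hγ hc'
      simp at hx; subst hx; exact hγ

theorem eq_of_ns {n : ℕ} (P Q : SetPartition n)
    (h : nsBlocks P.blocks = nsBlocks Q.blocks) : P = Q := by
  have : P.blocks = Q.blocks :=
    Finset.Subset.antisymm (blocks_subset_of_ns P Q h) (blocks_subset_of_ns Q P h.symm)
  cases P; cases Q; simp_all

theorem fmin_single (x : ℕ) : fmin {x} = x := by simp [fmin]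

theorem skip_eq_ns {n : ℕ} (P : SetPartition n) :
    skip P.blocks = skip (nsBlocks P.blocks) := by
  unfold skip
  symm
  unfold nsBlocks
  apply Finset.sum_filter_of_ne
  intro β hβ hne
  by_contra hc
  obtain ⟨x, rfl⟩ := card_one_of P hβ hc
  simp [fmin_single, fmax] at hne

def nsOf (q : ℕ × ℕ × ℕ × ℕ) : Finset (Finset ℕ) :=
  if q.2.1 = q.2.2.1 then {{q.1, q.2.1, q.2.2.2}}
  else {{q.1, q.2.1}, {q.2.2.1, q.2.2.2}}

def Valid (n : ℕ) (q : ℕ × ℕ × ℕ × ℕ) : Prop :=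
  1 ≤ q.1 ∧ q.2.1 ≤ n ∧ q.2.2.2 ≤ n ∧
    ((q.1 < q.2.1 ∧ q.2.1 = q.2.2.1 ∧ q.2.2.1 < q.2.2.2) ∨
     (q.1 < q.2.1 ∧ q.2.1 < q.2.2.1 ∧ q.2.2.1 < q.2.2.2) ∨
     (q.1 < q.2.2.1 ∧ q.2.2.1 < q.2.2.2 ∧ q.2.2.2 < q.2.1))

theorem fmin_eq {s : Finset ℕ} {a : ℕ} (ha : a ∈ s) (h : ∀ x ∈ s, a ≤ x) : fmin s = a := by
  have hs : s.Nonempty := ⟨a, ha⟩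
  simp only [fmin, hs, dite_true]
  exact le_antisymm (Finset.min'_le _ _ ha) (Finset.le_min' _ _ _ h)

theorem fmax_eq {s : Finset ℕ} {a : ℕ} (ha : a ∈ s) (h : ∀ x ∈ s, x ≤ a) : fmax s = a :=
  le_antisymm (Finset.sup_le h) (Finset.le_sup (f := id) ha)

theorem sort3 {a b c : ℕ} (h1 : a < b) (h2 : b < c) :
    ({a, b, c} : Finset ℕ).sort (· ≤ ·) = [a, b, c] := by
  rw [Finset.sort_insert, Finset.sort_insert, Finset.sort_singleton]
  · intro x hx; simp at hx; omega
  · simp; omega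
  · intro x hx; simp at hx; omega
  · simp; omega

theorem pair_ne {a b c d : ℕ} (h1 : a ≠ c) (h2 : a ≠ d) :
    ({a, b} : Finset ℕ) ≠ {c, d} := by
  intro h
  have : a ∈ ({c, d} : Finset ℕ) := h ▸ (by simp)
  simp at this; omega

theorem quad_of_ns {n : ℕ} {bs : Finset (Finset ℕ)} {q : ℕ × ℕ × ℕ × ℕ} (hq : Valid n q)
    (h : nsBlocks bs = nsOf q) : blockQuad bs = q := by
  obtain ⟨a, b, c, d⟩ := q
  obtain ⟨ha, hb, hd, hq⟩ := hq
  simp only at ha hb hd hq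
  unfold blockQuad
  rw [h]
  by_cases hbc : b = c
  · subst hbc
    have h1 : a < b := by omega
    have h2 : b < d := by omega
    have hm : fmin ({a, b, d} : Finset ℕ) = a :=
      fmin_eq (by simp) (by intro x hx; simp at hx; omega)
    simp [nsOf, blockContaining, hm, Finset.filter_singleton, sort3 h1 h2]
  · have hne : ({a, b} : Finset ℕ) ≠ {c, d} := pair_ne (by omega) (by omega)
    have hm : fmin (({a, b} : Finset ℕ) ∪ {c, d}) = a :=
      fmin_eq (by simp) (by intro x hx; simp at hx; omega)
    have hA : blockContaining {{a, b}, {c, d}} a = {a, b} := by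
      have : a ∉ ({c, d} : Finset ℕ) := by simp; omega
      simp [blockContaining, Finset.filter_insert, Finset.filter_singleton, this]
    have hE : ({{a, b}, {c, d}} : Finset (Finset ℕ)).erase {a, b} = {{c, d}} := by
      rw [Finset.erase_insert]; simpa using hne
    have e1 : fmin ({a, b} : Finset ℕ) = a :=
      fmin_eq (by simp) (by intro x hx; simp at hx; omega)
    have e2 : fmax ({a, b} : Finset ℕ) = b :=
      fmax_eq (by simp) (by intro x hx; simp at hx; omega)
    have e3 : fmin ({c, d} : Finset ℕ) = c :=
      fmin_eq (by simp) (by intro x hx; simp at hx; omega)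
    have e4 : fmax ({c, d} : Finset ℕ) = d :=
      fmax_eq (by simp) (by intro x hx; simp at hx; omega)
    have hs : ({{a, b}, {c, d}} : Finset (Finset ℕ)).sup id = {a, b} ∪ {c, d} := by
      rw [Finset.sup_insert, Finset.sup_singleton]; rfl
    simp only [nsOf, hbc, if_false, hs, hm, hA, hE, Finset.card_pair hne, Finset.sup_singleton,
      id, e1, e2, e3, e4]
    simp

def skipQ (q : ℕ × ℕ × ℕ × ℕ) : ℕ :=
  if q.2.1 = q.2.2.1 then q.2.2.2 - q.1 - 2
  else (q.2.1 - q.1 - 1) + (q.2.2.2 - q.2.2.1 - 1)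

def leapQ (q : ℕ × ℕ × ℕ × ℕ) : ℕ := (q.2.2.1 - 2) + (q.2.2.1 - q.2.1)

theorem skip_nsOf {n : ℕ} {q : ℕ × ℕ × ℕ × ℕ} (hq : Valid n q) : skip (nsOf q) = skipQ q := by
  obtain ⟨a, b, c, d⟩ := q
  obtain ⟨ha, hb, hd, hq⟩ := hq
  simp only at ha hb hd hq
  by_cases hbc : b = c
  · subst hbc
    have e1 : fmin ({a, b, d} : Finset ℕ) = a :=
      fmin_eq (by simp) (by intro x hx; simp at hx; omega)
    have e2 : fmax ({a, b, d} : Finset ℕ) = d :=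
      fmax_eq (by simp) (by intro x hx; simp at hx; omega)
    have e3 : ({a, b, d} : Finset ℕ).card = 3 :=
      Finset.card_eq_three.2 ⟨a, b, d, by omega, by omega, by omega, rfl⟩
    simp [skip, nsOf, skipQ, e1, e2, e3]
    omega
  · have hne : ({a, b} : Finset ℕ) ≠ {c, d} := pair_ne (by omega) (by omega)
    have e1 : fmin ({a, b} : Finset ℕ) = a :=
      fmin_eq (by simp) (by intro x hx; simp at hx; omega)
    have e2 : fmax ({a, b} : Finset ℕ) = b :=
      fmax_eq (by simp) (by intro x hx; simp at hx; omega)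
    have e3 : fmin ({c, d} : Finset ℕ) = c :=
      fmin_eq (by simp) (by intro x hx; simp at hx; omega)
    have e4 : fmax ({c, d} : Finset ℕ) = d :=
      fmax_eq (by simp) (by intro x hx; simp at hx; omega)
    have c1 : ({a, b} : Finset ℕ).card = 2 := Finset.card_pair (by omega)
    have c2 : ({c, d} : Finset ℕ).card = 2 := Finset.card_pair (by omega)
    simp only [skip, nsOf, skipQ, hbc, if_false, Finset.sum_pair hne, e1, e2, e3, e4, c1, c2]
    omega

theorem two_sorted {s : Finset ℕ} (h : s.card = 2) : ∃ a b, a < b ∧ s = {a, b} := by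
  obtain ⟨x, y, hxy, rfl⟩ := Finset.card_eq_two.1 h
  rcases lt_or_gt_of_ne hxy with h | h
  · exact ⟨x, y, h, rfl⟩
  · exact ⟨y, x, h, Finset.pair_comm _ _⟩

theorem three_sorted {s : Finset ℕ} (h : s.card = 3) :
    ∃ a b c, a < b ∧ b < c ∧ s = {a, b, c} := by
  have hs : s.Nonempty := Finset.card_pos.1 (by omega)
  have hm := s.min'_mem hs
  have h2 : (s.erase (s.min' hs)).card = 2 := by rw [Finset.card_erase_of_mem hm]; omega
  obtain ⟨b, c, hbc, he⟩ := two_sorted h2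
  refine ⟨s.min' hs, b, c, ?_, hbc, ?_⟩
  · have hb : b ∈ s.erase (s.min' hs) := by rw [he]; simp
    exact lt_of_le_of_ne (Finset.min'_le _ _ (Finset.mem_of_mem_erase hb))
      (Finset.ne_of_mem_erase hb).symm
  · rw [← he, Finset.insert_erase hm]

theorem exists_quad {n : ℕ} (hn : 3 ≤ n) (P : NC n 3) :
    ∃ q, Valid n q ∧ nsBlocks P.val.blocks = nsOf q := by
  obtain ⟨P, hnc, hcard⟩ := P
  simp only
  have hsum := ns_sum P
  have hsum2 : ∑ β ∈ nsBlocks P.blocks, (β.card - 1) = 2 := by omega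
  have hge : ∀ β ∈ nsBlocks P.blocks, 2 ≤ β.card := fun β hβ => (Finset.mem_filter.1 hβ).2
  have hmem : ∀ β ∈ nsBlocks P.blocks, β ∈ P.blocks := fun β hβ => (Finset.mem_filter.1 hβ).1
  have hIcc : ∀ β ∈ nsBlocks P.blocks, ∀ x ∈ β, 1 ≤ x ∧ x ≤ n := fun β hβ x hx =>
    Finset.mem_Icc.1 ((P.cover x).2 ⟨β, hmem β hβ, hx⟩)
  have hle : (nsBlocks P.blocks).card ≤ 2 := by
    rw [← hsum2, Finset.card_eq_sum_ones]
    apply Finset.sum_le_sum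
    intro β hβ
    have := hge β hβ
    omega
  generalize hS : nsBlocks P.blocks = S at *
  have h0 : S.card ≠ 0 := by
    intro h0
    rw [Finset.card_eq_zero] at h0
    subst h0; simp at hsum2
  rcases (by omega : S.card = 1 ∨ S.card = 2) with h1 | h1
  · obtain ⟨β, rfl⟩ := Finset.card_eq_one.1 h1
    simp at hsum2
    obtain ⟨a, b, d, hab, hbd, rfl⟩ := three_sorted (s := β) (by omega)
    refine ⟨(a, b, b, d), ?_, by simp [nsOf]⟩
    have ha := hIcc {a, b, d} (by simp) a (by simp)
    have hb := hIcc {a, b, d} (by simp) b (by simp)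
    have hd := hIcc {a, b, d} (by simp) d (by simp)
    simp only [Valid, true_and]; omega
  · obtain ⟨β, γ, hne, rfl⟩ := Finset.card_eq_two.1 h1
    rw [Finset.sum_pair hne] at hsum2
    have g1 := hge β (by simp)
    have g2 := hge γ (by simp)
    have key : ∀ a b c d : ℕ, a < b → c < d → a < c → ({a, b} : Finset ℕ) ∈ P.blocks →
        ({c, d} : Finset ℕ) ∈ P.blocks → Valid n (a, b, c, d) ∧ b ≠ c := by
      intro a b c d hab hcd hac m1 m2
      have hne : ({a, b} : Finset ℕ) ≠ {c, d} := pair_ne (by omega) (by omega)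
      have hdis := P.disjoint _ m1 _ m2 hne
      have i1 : b ≠ c := by rintro rfl; simp at hdis
      have i2 : b ≠ d := by rintro rfl; simp at hdis
      have i3 : ¬ (c < b ∧ b < d) := by
        rintro ⟨x, y⟩
        exact hne (hnc a c b d hac x y _ m1 _ m2 (by simp) (by simp) (by simp) (by simp))
      have ha := Finset.mem_Icc.1 ((P.cover a).2 ⟨_, m1, by simp⟩)
      have hb := Finset.mem_Icc.1 ((P.cover b).2 ⟨_, m1, by simp⟩)
      have hd := Finset.mem_Icc.1 ((P.cover d).2 ⟨_, m2, by simp⟩)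
      refine ⟨?_, i1⟩
      simp only [Valid]; omega
    obtain ⟨a, b, hab, rfl⟩ := two_sorted (s := β) (by omega)
    obtain ⟨c, d, hcd, rfl⟩ := two_sorted (s := γ) (by omega)
    have m1 := hmem {a, b} (by simp)
    have m2 := hmem {c, d} (by simp)
    have hac : a ≠ c := by
      rintro rfl
      exact hne (eq_of_mem_mem P m1 m2 (x := a) (by simp) (by simp))
    rcases lt_or_gt_of_ne hac with h | h
    · obtain ⟨k1, k2⟩ := key a b c d hab hcd h m1 m2
      exact ⟨_, k1, by simp [nsOf, k2]⟩
    · obtain ⟨k1, k2⟩ := key c d a b hcd hab h m2 m1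
      exact ⟨_, k1, by simp only [nsOf, k2, if_false]; exact Finset.pair_comm _ _⟩

def mkBlocks (n : ℕ) (S : Finset (Finset ℕ)) : Finset (Finset ℕ) :=
  S ∪ ((Finset.Icc 1 n).filter (fun x => ∀ β ∈ S, x ∉ β)).image (fun x => {x})

theorem mem_mkBlocks {n : ℕ} {S : Finset (Finset ℕ)} {β : Finset ℕ} :
    β ∈ mkBlocks n S ↔ β ∈ S ∨ ∃ x, (1 ≤ x ∧ x ≤ n) ∧ (∀ γ ∈ S, x ∉ γ) ∧ β = {x} := by
  simp only [mkBlocks, Finset.mem_union, Finset.mem_image, Finset.mem_filter, Finset.mem_Icc]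
  constructor
  · rintro (h | ⟨x, ⟨h1, h2⟩, rfl⟩)
    · exact Or.inl h
    · exact Or.inr ⟨x, h1, h2, rfl⟩
  · rintro (h | ⟨x, h1, h2, rfl⟩)
    · exact Or.inl h
    · exact Or.inr ⟨x, ⟨h1, h2⟩, rfl⟩

def mkPart (n : ℕ) (S : Finset (Finset ℕ)) (h2 : ∀ β ∈ S, 2 ≤ β.card)
    (hI : ∀ β ∈ S, ∀ x ∈ β, 1 ≤ x ∧ x ≤ n)
    (hd : ∀ β ∈ S, ∀ γ ∈ S, β ≠ γ → Disjoint β γ) : SetPartition n where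
  blocks := mkBlocks n S
  not_empty_mem := by
    rw [mem_mkBlocks]
    rintro (h | ⟨x, _, _, h⟩)
    · have := h2 _ h; simp at this
    · exact (Finset.singleton_ne_empty x) h.symm
  cover := by
    intro i
    rw [Finset.mem_Icc]
    constructor
    · intro hi
      by_cases h : ∃ β ∈ S, i ∈ β
      · obtain ⟨β, hβ, hi⟩ := h
        exact ⟨β, mem_mkBlocks.2 (Or.inl hβ), hi⟩
      · push Not at h
        exact ⟨{i}, mem_mkBlocks.2 (Or.inr ⟨i, hi, h, rfl⟩), by simp⟩
    · rintro ⟨β, hβ, hi⟩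
      rcases mem_mkBlocks.1 hβ with h | ⟨x, hx, _, rfl⟩
      · exact hI β h i hi
      · simp at hi; subst hi; exact hx
  disjoint := by
    intro β hβ γ hγ hne
    rcases mem_mkBlocks.1 hβ with h | ⟨x, hx, hx', rfl⟩ <;>
    rcases mem_mkBlocks.1 hγ with h' | ⟨y, hy, hy', rfl⟩
    · exact hd β h γ h' hne
    · simpa using hy' β h
    · simpa using hx' γ h'
    · simp at hne ⊢; omega

theorem ns_mkBlocks {n : ℕ} {S : Finset (Finset ℕ)} (h2 : ∀ β ∈ S, 2 ≤ β.card) :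
    nsBlocks (mkBlocks n S) = S := by
  ext β
  simp only [nsBlocks, Finset.mem_filter, mem_mkBlocks]
  constructor
  · rintro ⟨h | ⟨x, _, _, rfl⟩, hc⟩
    · exact h
    · simp at hc
  · intro h; exact ⟨Or.inl h, h2 β h⟩

theorem nc_mkBlocks {n : ℕ} {S : Finset (Finset ℕ)} (h : IsNoncrossing S) :
    IsNoncrossing (mkBlocks n S) := by
  intro a b c d hab hbc hcd β hβ γ hγ h1 h2 h3 h4
  rcases mem_mkBlocks.1 hβ with hb | ⟨x, _, _, rfl⟩
  · rcases mem_mkBlocks.1 hγ with hg | ⟨x, _, _, rfl⟩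
    · exact h a b c d hab hbc hcd β hb γ hg h1 h2 h3 h4
    · simp at h3 h4; omega
  · simp at h1 h2; omega

theorem exists_nc {n : ℕ} (hn : 3 ≤ n) {q : ℕ × ℕ × ℕ × ℕ} (hq : Valid n q) :
    ∃ P : NC n 3, nsBlocks P.val.blocks = nsOf q := by
  obtain ⟨a, b, c, d⟩ := q
  obtain ⟨ha, hb, hd, hq⟩ := hq
  simp only at ha hb hd hq
  suffices H : (∀ β ∈ nsOf (a, b, c, d), 2 ≤ β.card) ∧
      (∀ β ∈ nsOf (a, b, c, d), ∀ x ∈ β, 1 ≤ x ∧ x ≤ n) ∧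
      (∀ β ∈ nsOf (a, b, c, d), ∀ γ ∈ nsOf (a, b, c, d), β ≠ γ → Disjoint β γ) ∧
      IsNoncrossing (nsOf (a, b, c, d)) ∧
      ∑ β ∈ nsOf (a, b, c, d), (β.card - 1) = 2 by
    obtain ⟨h2, hI, hdis, hnc, hsum⟩ := H
    have hs := ns_sum (mkPart n _ h2 hI hdis)
    have e : nsBlocks (mkPart n _ h2 hI hdis).blocks = nsOf (a, b, c, d) := ns_mkBlocks h2
    rw [e, hsum] at hs
    exact ⟨⟨mkPart n _ h2 hI hdis, nc_mkBlocks hnc, by omega⟩, e⟩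
  by_cases hbc : b = c
  · subst hbc
    have e3 : ({a, b, d} : Finset ℕ).card = 3 :=
      Finset.card_eq_three.2 ⟨a, b, d, by omega, by omega, by omega, rfl⟩
    have e : nsOf (a, b, b, d) = {{a, b, d}} := by simp [nsOf]
    rw [e]
    refine ⟨?_, ?_, ?_, ?_, ?_⟩
    · simp [e3]
    · simp; omega
    · simp
    · intro _ _ _ _ _ _ _ β hβ γ hγ _ _ _ _
      simp at hβ hγ; rw [hβ, hγ]
    · simp [e3]
  · have hne : ({a, b} : Finset ℕ) ≠ {c, d} := pair_ne (by omega) (by omega)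
    have c1 : ({a, b} : Finset ℕ).card = 2 := Finset.card_pair (by omega)
    have c2 : ({c, d} : Finset ℕ).card = 2 := Finset.card_pair (by omega)
    have e : nsOf (a, b, c, d) = {{a, b}, {c, d}} := by simp [nsOf, hbc]
    have hdis : Disjoint ({a, b} : Finset ℕ) {c, d} := by
      rw [Finset.disjoint_left]; intro x h1 h2; simp at h1 h2; omega
    rw [e]
    refine ⟨?_, ?_, ?_, ?_, ?_⟩
    · simp [c1, c2]
    · simp; omega
    · intro β hβ γ hγ hn
      simp only [Finset.mem_insert, Finset.mem_singleton] at hβ hγ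
      rcases hβ with rfl | rfl <;> rcases hγ with rfl | rfl
      · exact absurd rfl hn
      · exact hdis
      · exact hdis.symm
      · exact absurd rfl hn
    · intro x y z w h1 h2 h3 β hβ γ hγ g1 g2 g3 g4
      simp only [Finset.mem_insert, Finset.mem_singleton] at hβ hγ
      rcases hβ with rfl | rfl <;> rcases hγ with rfl | rfl
      · rfl
      · simp at g1 g2 g3 g4; omega
      · simp at g1 g2 g3 g4; omega
      · rfl
    · rw [Finset.sum_pair hne, c1, c2]

def flipQ (q : ℕ × ℕ × ℕ × ℕ) : ℕ × ℕ × ℕ × ℕ :=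
  if q.2.1 ≤ q.2.2.1 then
    if q.2.1 = q.2.2.1 then
      (q.2.2.2 - q.2.1, q.2.2.2 - q.1, q.2.2.2 - q.1, q.2.2.2)
    else
      (q.2.2.2 - q.2.2.1, q.2.2.2, q.2.2.2 - q.1 - (q.2.2.1 - q.2.1), q.2.2.2 - q.1)
  else
    (q.2.1 - q.2.2.2, q.2.1 - q.1 - (q.2.2.2 - q.2.2.1), q.2.1 - q.1, q.2.1)

theorem flip_spec {n : ℕ} {q : ℕ × ℕ × ℕ × ℕ} (hq : Valid n q) :
    Valid n (flipQ q) ∧ flipQ (flipQ q) = q ∧ skipQ (flipQ q) = leapQ q ∧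
      leapQ (flipQ q) = skipQ q := by
  obtain ⟨a, b, c, d⟩ := q
  obtain ⟨ha, hb, hd, hq⟩ := hq
  simp only at ha hb hd hq
  rcases hq with ⟨h1, rfl, h3⟩ | ⟨h1, h2, h3⟩ | ⟨h1, h2, h3⟩
  · have e : flipQ (a, b, b, d) = (d - b, d - a, d - a, d) := by simp [flipQ]
    rw [e]
    refine ⟨?_, ?_, ?_, ?_⟩
    · simp only [Valid, true_and, and_true]; omega
    · simp only [flipQ, le_refl, if_true, Prod.mk.injEq, true_and, and_true]; omega
    · simp only [skipQ, leapQ, if_true]; omega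
    · simp only [skipQ, leapQ, if_true]; omega
  · have e : flipQ (a, b, c, d) = (d - c, d, d - a - (c - b), d - a) := by
      simp only [flipQ]; rw [if_pos (by omega), if_neg (by omega)]
    rw [e]
    refine ⟨?_, ?_, ?_, ?_⟩
    · simp only [Valid, true_and, and_true]; omega
    · simp only [flipQ]; rw [if_neg (by omega)]; simp only [Prod.mk.injEq, true_and, and_true]; omega
    · simp only [skipQ, leapQ]; rw [if_neg (by omega)]; omega
    · simp only [skipQ, leapQ]; rw [if_neg (by omega)]; omega
  · have e : flipQ (a, b, c, d) = (b - d, b - a - (d - c), b - a, b) := by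
      simp only [flipQ]; rw [if_neg (by omega)]
    rw [e]
    refine ⟨?_, ?_, ?_, ?_⟩
    · simp only [Valid, true_and, and_true]; omega
    · simp only [flipQ]; rw [if_pos (by omega), if_neg (by omega)]
      simp only [Prod.mk.injEq, true_and, and_true]; omega
    · simp only [skipQ, leapQ]; rw [if_neg (by omega)]; omega
    · simp only [skipQ, leapQ]; rw [if_neg (by omega)]; omega

theorem card_eq_quads {n : ℕ} (hn : 3 ≤ n) (u v : ℕ) :
    Nat.card {π : NC n 3 // skip π.val.blocks = u ∧ leap π.val.blocks = v} =
    Nat.card {q : ℕ × ℕ × ℕ × ℕ // Valid n q ∧ skipQ q = u ∧ leapQ q = v} := by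
  have hspec : ∀ (P : NC n 3) q, Valid n q → nsBlocks P.val.blocks = nsOf q →
      blockQuad P.val.blocks = q ∧ skip P.val.blocks = skipQ q ∧ leap P.val.blocks = leapQ q := by
    intro P q hq h
    have hb := quad_of_ns hq h
    refine ⟨hb, ?_, ?_⟩
    · rw [skip_eq_ns, h, skip_nsOf hq]
    · unfold leap; rw [hb]; rfl
  apply Nat.card_eq_of_bijective (fun π => ⟨blockQuad π.1.val.blocks, by
    obtain ⟨P, hu, hv⟩ := π
    obtain ⟨q, hq, h⟩ := exists_quad hn P
    obtain ⟨h1, h2, h3⟩ := hspec P q hq h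
    simp only [h1]
    exact ⟨hq, h2 ▸ hu, h3 ▸ hv⟩⟩)
  constructor
  · rintro ⟨P, hP⟩ ⟨Q, hQ⟩ h
    simp only [Subtype.mk.injEq] at h
    obtain ⟨q, hq, h1⟩ := exists_quad hn P
    obtain ⟨q', hq', h1'⟩ := exists_quad hn Q
    rw [(hspec P q hq h1).1, (hspec Q q' hq' h1').1] at h
    subst h
    exact Subtype.ext (Subtype.ext (eq_of_ns _ _ (h1.trans h1'.symm)))
  · rintro ⟨q, hq, hu, hv⟩
    obtain ⟨P, hP⟩ := exists_nc hn hq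
    obtain ⟨h1, h2, h3⟩ := hspec P q hq hP
    exact ⟨⟨P, h2.trans hu, h3.trans hv⟩, Subtype.ext h1⟩

/-- Combinatorial symmetry `N_{n,3}(q,t) = N_{n,3}(t,q)` via the pair (skip, leap):
for all `n ≥ 3` and `u v`, the number of `π ∈ NC(n,3)` with `skip π = u` and
`leap π = v` equals the number with `skip π = v` and `leap π = u`. -/
theorem skip_leap_symmetry (n u v : ℕ) (hn : 3 ≤ n) :
    Nat.card {π : NC n 3 // skip π.val.blocks = u ∧ leap π.val.blocks = v} =
    Nat.card {π : NC n 3 // skip π.val.blocks = v ∧ leap π.val.blocks = u} := by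
  rw [card_eq_quads hn, card_eq_quads hn]
  exact Nat.card_congr
    { toFun := fun q => ⟨flipQ q.1, (flip_spec q.2.1).1,
        (flip_spec q.2.1).2.2.1.trans q.2.2.2, (flip_spec q.2.1).2.2.2.trans q.2.2.1⟩
      invFun := fun q => ⟨flipQ q.1, (flip_spec q.2.1).1,
        (flip_spec q.2.1).2.2.1.trans q.2.2.2, (flip_spec q.2.1).2.2.2.trans q.2.2.1⟩
      left_inv := fun q => Subtype.ext (flip_spec q.2.1).2.1
      right_inv := fun q => Subtype.ext (flip_spec q.2.1).2.1 }
end QtN
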